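/- Let H be an m×m real lower-triangular matrix (H_{ij} = 0 for j > i) with all diagonal entries strictly positive, let T ⊆ {1,…,m}, let b ∈ ℝ^m, and let H' be an m×m real matrix such that: (i) the j-th column of H' equals the j-th column of H for every j ∉ T; (ii) for every t ∈ T, the t-th column of H is the t-th standard basis vector e_t; (iii) for every t ∈ T there exist an index p_t ≠ t and a real α_t ≥ 0 such that the t-th row of H' equals α_t·e_{p_t}ᵀ + e_tᵀ. Let Ã, B̃ be the associated (m+1)×(m+1) payoff matrices built from H, H', b. Then every Nash equilibrium ((x̃,s),(ỹ,t)) of the bimatrix game (Ã,B̃) satisfies s > 0 and t > 0. -/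

import Mathlib

/-!
Write `z₁ = (x, s)` and `z₂ = (y, t)`, and let `V` be the first player's equilibrium payoff.
Some row always pays the first player a positive amount (`exists_pos_payoff`): for `y ≠ 0`, the row
of the largest index in the support of `y`, by triangularity of `H`; for `y = 0`, the last row. So
`V > 0`.

If `s = 0`, the second player can secure `0` with her last column. For `k ∈ T` with `x k > 0`,
column `k` pays her `-(H' x)ₖ < 0`, so `y k = 0`; but then row `k` pays the first player
`(Hᵀ y)ₖ = y k = 0 < V`, so `x k = 0`, a contradiction. Hence `x` vanishes on `T`, which gives
`H' x = H x`: against each other the players get `V` and `-V`, although the second player can get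
`0`. So `s > 0`. Then the last row is a best response, and its payoff `t` equals `V > 0`.
-/

open Matrix BigOperators

/-- The `(m+1)×(m+1)` payoff matrix `Ã`: top-left `m×m` block `Hᵀ`, entry `1`
in position `(m+1,m+1)`, zeros elsewhere. -/
def Atilde {m : ℕ} (H : Matrix (Fin m) (Fin m) ℝ) :
    Matrix (Fin m ⊕ Unit) (Fin m ⊕ Unit) ℝ :=
  Matrix.fromBlocks H.transpose 0 0 1

/-- The `(m+1)×(m+1)` payoff matrix `B̃`: top-left `m×m` block `−H'ᵀ`, last row
`(b₁+1,…,b_m+1, 1)`, zeros elsewhere. -/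
def Btilde {m : ℕ} (H' : Matrix (Fin m) (Fin m) ℝ) (b : Fin m → ℝ) :
    Matrix (Fin m ⊕ Unit) (Fin m ⊕ Unit) ℝ :=
  Matrix.fromBlocks (-H'.transpose) 0 (Matrix.of fun _ j => b j + 1) 1

/-- A mixed strategy over `m+1` pure strategies. -/
def IsMixed {m : ℕ} (z : Fin m ⊕ Unit → ℝ) : Prop :=
  (∀ d, 0 ≤ z d) ∧ ∑ d, z d = 1

/-- `(z₁, z₂)` is a Nash equilibrium of the bimatrix game `(Ã, B̃)`. -/
def IsNash {m : ℕ} (Ab Bb : Matrix (Fin m ⊕ Unit) (Fin m ⊕ Unit) ℝ)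
    (z₁ z₂ : Fin m ⊕ Unit → ℝ) : Prop :=
  IsMixed z₁ ∧ IsMixed z₂ ∧
  (∀ z₁', IsMixed z₁' → z₁' ⬝ᵥ Ab.mulVec z₂ ≤ z₁ ⬝ᵥ Ab.mulVec z₂) ∧
  (∀ z₂', IsMixed z₂' → z₁ ⬝ᵥ Bb.mulVec z₂' ≤ z₁ ⬝ᵥ Bb.mulVec z₂)

section BestResponse

variable {m : ℕ} {z v : Fin m ⊕ Unit → ℝ}

lemma IsMixed.single (i : Fin m ⊕ Unit) : IsMixed (Pi.single i 1 : Fin m ⊕ Unit → ℝ) := by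
  refine ⟨fun d => ?_, by simp⟩
  by_cases h : d = i
  · subst h; simp
  · simp [h]

lemma payoff_le_of_best (h : ∀ z', IsMixed z' → z' ⬝ᵥ v ≤ z ⬝ᵥ v) (i : Fin m ⊕ Unit) :
    v i ≤ z ⬝ᵥ v := by
  simpa using h _ (IsMixed.single i)

/-- In a best response, every pure strategy of positive weight attains the optimal payoff. -/
lemma payoff_eq_of_best (hz : IsMixed z) (h : ∀ z', IsMixed z' → z' ⬝ᵥ v ≤ z ⬝ᵥ v)
    {i : Fin m ⊕ Unit} (hi : 0 < z i) : v i = z ⬝ᵥ v := by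
  have h0 : ∑ d, z d * (z ⬝ᵥ v - v d) = 0 := by
    simp only [mul_sub, Finset.sum_sub_distrib, ← Finset.sum_mul, hz.2]
    simp [dotProduct]
  have h1 := (Finset.sum_eq_zero_iff_of_nonneg (fun d _ =>
    mul_nonneg (hz.1 d) (sub_nonneg.2 (payoff_le_of_best h d)))).1 h0 i (Finset.mem_univ i)
  rcases mul_eq_zero.1 h1 with h2 | h2 <;> linarith

end BestResponse

section Payoffs

variable {m : ℕ} (H : Matrix (Fin m) (Fin m) ℝ) (b : Fin m → ℝ) (z : Fin m ⊕ Unit → ℝ)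

lemma Atilde_mulVec_inl (i : Fin m) :
    (Atilde H).mulVec z (Sum.inl i) = ∑ j, H j i * z (Sum.inl j) := by
  simp [Atilde, mulVec, dotProduct]

lemma Atilde_mulVec_inr : (Atilde H).mulVec z (Sum.inr ()) = z (Sum.inr ()) := by
  simp [Atilde, mulVec, dotProduct]

lemma vecMul_Btilde_inl (hs : z (Sum.inr ()) = 0) (j : Fin m) :
    vecMul z (Btilde H b) (Sum.inl j) = -∑ i, H j i * z (Sum.inl i) := by
  simp [Btilde, vecMul, dotProduct, hs, mul_comm]

lemma vecMul_Btilde_inr : vecMul z (Btilde H b) (Sum.inr ()) = z (Sum.inr ()) := by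
  simp [Btilde, vecMul, dotProduct]

end Payoffs

lemma exists_pos_payoff {m : ℕ} {H : Matrix (Fin m) (Fin m) ℝ}
    (hlow : ∀ i j : Fin m, i < j → H i j = 0) (hdiag : ∀ i, 0 < H i i)
    {z : Fin m ⊕ Unit → ℝ} (hz : IsMixed z) : ∃ i, 0 < (Atilde H).mulVec z i := by
  classical
  by_cases hne : (Finset.univ.filter fun j : Fin m => 0 < z (Sum.inl j)).Nonempty
  · obtain ⟨k, hk, hmax⟩ := Finset.exists_max_image _ id hne
    simp only [Finset.mem_filter, Finset.mem_univ, true_and, id] at hk hmax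
    refine ⟨Sum.inl k, ?_⟩
    rw [Atilde_mulVec_inl, Finset.sum_eq_single k]
    · exact mul_pos (hdiag k) hk
    · intro j _ hjk
      rcases lt_or_gt_of_ne hjk with h | h
      · rw [hlow _ _ h, zero_mul]
      · have : ¬ 0 < z (Sum.inl j) := fun hj => absurd (hmax j hj) (not_le.2 h)
        rw [le_antisymm (not_lt.1 this) (hz.1 _), mul_zero]
    · simp
  · have h0 : ∀ j : Fin m, z (Sum.inl j) = 0 := fun j =>
      le_antisymm (not_lt.1 fun hj => hne ⟨j, by simpa using hj⟩) (hz.1 _)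
    have h1 := hz.2
    simp only [Fintype.sum_sum_type, h0, Finset.sum_const_zero, zero_add] at h1
    refine ⟨Sum.inr (), ?_⟩
    rw [Atilde_mulVec_inr]
    simp at h1
    simp [h1]

/-- Under the structural hypotheses on `H` (lower-triangular
with strictly positive diagonal), `T` and `H'`, every Nash equilibrium
`((x̃,s),(ỹ,t))` of `(Ã,B̃)` has `s > 0` and `t > 0`. -/
theorem nash_last_strategies_positive
    (m : ℕ) (hm : 1 ≤ m) (T : Finset (Fin m))
    (H H' : Matrix (Fin m) (Fin m) ℝ) (b : Fin m → ℝ)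
    (hlow : ∀ i j : Fin m, i < j → H i j = 0)
    (hdiag : ∀ i, 0 < H i i)
    (hcol : ∀ j ∉ T, ∀ i, H' i j = H i j)
    (hHcol : ∀ t ∈ T, ∀ i, H i t = if i = t then 1 else 0)
    (hrow : ∀ t ∈ T, ∃ p : Fin m, p ≠ t ∧ ∃ α : ℝ, 0 ≤ α ∧
        ∀ j, H' t j = α * (if j = p then 1 else 0) + (if j = t then 1 else 0))
    (z₁ z₂ : Fin m ⊕ Unit → ℝ)
    (hNE : IsNash (Atilde H) (Btilde H' b) z₁ z₂) :
    0 < z₁ (Sum.inr ()) ∧ 0 < z₂ (Sum.inr ()) := by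
  obtain ⟨hz1, hz2, hbest1, hbest2⟩ := hNE
  have hbest2' : ∀ z', IsMixed z' →
      z' ⬝ᵥ vecMul z₁ (Btilde H' b) ≤ z₂ ⬝ᵥ vecMul z₁ (Btilde H' b) := by
    intro z' hz'
    simpa only [dotProduct_mulVec, dotProduct_comm] using hbest2 z' hz'
  have hV : 0 < z₁ ⬝ᵥ (Atilde H).mulVec z₂ := by
    obtain ⟨i, hi⟩ := exists_pos_payoff hlow hdiag hz2
    exact hi.trans_le (payoff_le_of_best hbest1 i)
  have hs : 0 < z₁ (Sum.inr ()) := by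
    by_contra hneg
    have hs0 : z₁ (Sum.inr ()) = 0 := le_antisymm (not_lt.1 hneg) (hz1.1 _)
    have hW : 0 ≤ z₂ ⬝ᵥ vecMul z₁ (Btilde H' b) := by
      have := payoff_le_of_best hbest2' (Sum.inr ())
      rwa [vecMul_Btilde_inr, hs0] at this
    have hxT : ∀ k ∈ T, z₁ (Sum.inl k) = 0 := by
      intro k hk
      by_contra hne
      have hpos : 0 < z₁ (Sum.inl k) := lt_of_le_of_ne (hz1.1 _) (Ne.symm hne)
      have hrowpos : 0 < ∑ i, H' k i * z₁ (Sum.inl i) := by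
        obtain ⟨p, _, α, hα, hr⟩ := hrow k hk
        have : ∑ i, H' k i * z₁ (Sum.inl i) = α * z₁ (Sum.inl p) + z₁ (Sum.inl k) := by
          simp [hr, add_mul, Finset.sum_add_distrib]
        rw [this]
        exact add_pos_of_nonneg_of_pos (mul_nonneg hα (hz1.1 _)) hpos
      have hy : z₂ (Sum.inl k) = 0 := by
        by_contra hyne
        have := payoff_eq_of_best hz2 hbest2' (lt_of_le_of_ne (hz2.1 (Sum.inl k)) (Ne.symm hyne))
        rw [vecMul_Btilde_inl _ _ _ hs0] at this
        linarith
      have h1 := payoff_eq_of_best hz1 hbest1 hpos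
      have h2 : (Atilde H).mulVec z₂ (Sum.inl k) = 0 := by
        simp [Atilde_mulVec_inl, hHcol k hk, hy]
      linarith
    have hHx : ∀ j, ∑ i, H' j i * z₁ (Sum.inl i) = ∑ i, H j i * z₁ (Sum.inl i) := by
      intro j
      refine Finset.sum_congr rfl fun i _ => ?_
      by_cases hi : i ∈ T
      · rw [hxT i hi, mul_zero, mul_zero]
      · rw [hcol i hi]
    -- With `s = 0` and `H' x = H x`, the payoffs of the two players sum to zero.
    have hzero : z₂ ⬝ᵥ vecMul z₁ (Btilde H' b) = -(z₁ ⬝ᵥ (Atilde H).mulVec z₂) := by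
      simp only [dotProduct, Fintype.sum_sum_type, vecMul_Btilde_inl _ _ _ hs0,
        Atilde_mulVec_inl, Finset.univ_unique, Finset.sum_singleton, PUnit.default_eq_unit,
        vecMul_Btilde_inr, hs0, mul_zero, zero_mul, add_zero, hHx, mul_neg,
        Finset.sum_neg_distrib, Finset.mul_sum]
      rw [Finset.sum_comm]
      congr 1
      refine Finset.sum_congr rfl fun i _ => Finset.sum_congr rfl fun j _ => ?_
      ring
    linarith
  refine ⟨hs, ?_⟩
  have := payoff_eq_of_best hz1 hbest1 hs
  rw [Atilde_mulVec_inr] at this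
  rwa [this]
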